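/- arXiv:2205.00386 — 2 statements merged into one kernel-verified Lean document; each statement's English description precedes it below -/
import Mathlib

section
/- Let p : E ⥤ B be a cocartesian fibration of categories. Vertical morphisms are stable under pullback: if f : x ⟶ y is a vertical morphism of E (i.e. p f is an isomorphism), g : y' ⟶ y is any morphism of E, and a pullback square in E of f along g exists, with projections f' : x' ⟶ y' and g' : x' ⟶ x, then f' is vertical (p f' is an isomorphism). -/
open CategoryTheory CategoryTheory.Limits

namespace MoensPaper

variable {E : Type*} [Category E] {B : Type*} [Category B]

/-- A morphism `φ` of `E` is (strongly) cocartesian over `p`. -/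
def IsCocart (p : E ⥤ B) {x y : E} (φ : x ⟶ y) : Prop :=
  ∀ {z : E} (ψ : x ⟶ z) (v : p.obj y ⟶ p.obj z),
    p.map ψ = p.map φ ≫ v → ∃! τ : y ⟶ z, p.map τ = v ∧ φ ≫ τ = ψ

/-- A morphism `φ` of `E` is (strongly) cartesian over `p`. -/
def IsCart (p : E ⥤ B) {x y : E} (φ : x ⟶ y) : Prop :=
  ∀ {z : E} (ψ : z ⟶ y) (v : p.obj z ⟶ p.obj x),
    p.map ψ = v ≫ p.map φ → ∃! τ : z ⟶ x, p.map τ = v ∧ τ ≫ φ = ψ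

/-- `p` is a cocartesian fibration (Grothendieck opfibration): every morphism of `B`
with domain `p.obj x` admits a cocartesian lift with source `x`. -/
def IsCocartFib (p : E ⥤ B) : Prop :=
  ∀ (x : E) (b : B) (u : p.obj x ⟶ b),
    ∃ (y : E) (φ : x ⟶ y) (h : p.obj y = b),
      IsCocart p φ ∧ p.map φ = u ≫ eqToHom h.symm

/-- `p` is a cartesian fibration (Grothendieck fibration): every morphism of `B`
with codomain `p.obj y` admits a cartesian lift with target `y`. -/
def IsCartFib (p : E ⥤ B) : Prop :=
  ∀ (y : E) (b : B) (u : b ⟶ p.obj y),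
    ∃ (x : E) (φ : x ⟶ y) (h : p.obj x = b),
      IsCart p φ ∧ p.map φ = eqToHom h ≫ u

/-!
Over an opfibration, every morphism factors as a cocartesian one followed by a vertical one, and
cocartesian morphisms have the left lifting property against vertical ones. By the retract
argument, the vertical morphisms are exactly those with the right lifting property against the
cocartesian ones, and such a class is stable under base change.
-/

/-- The class of morphisms of `E` that are cocartesian over `p`; it is the left class of the
(cocartesian, vertical) factorization system. -/
def cocartesian (p : E ⥤ B) : MorphismProperty E := fun _ _ φ ↦ IsCocart p φ

/-- The class of vertical morphisms, the right class of the (cocartesian, vertical) factorization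
system. Vertical means sent to an isomorphism, not necessarily to an identity. -/
abbrev vertical (p : E ⥤ B) : MorphismProperty E :=
  (MorphismProperty.isomorphisms B).inverseImage p

theorem IsCocart.hom_ext {p : E ⥤ B} {x y z : E} {φ : x ⟶ y} (hφ : IsCocart p φ) {τ τ' : y ⟶ z}
    (hmap : p.map τ = p.map τ') (hcomp : φ ≫ τ = φ ≫ τ') : τ = τ' :=
  (hφ (φ ≫ τ') (p.map τ') (p.map_comp φ τ')).unique ⟨hmap, hcomp⟩ ⟨rfl, rfl⟩

theorem IsCocart.hasLiftingProperty {p : E ⥤ B} {w x y z : E} {φ : w ⟶ x} (hφ : IsCocart p φ)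
    (f : y ⟶ z) [IsIso (p.map f)] : HasLiftingProperty φ f where
  sq_hasLift {a b} sq := by
    have map_a : p.map a = p.map φ ≫ p.map b ≫ inv (p.map f) := by
      rw [← Category.assoc, IsIso.eq_comp_inv, ← p.map_comp, ← p.map_comp, sq.w]
    obtain ⟨d, ⟨map_d, fac_left⟩, -⟩ := hφ a _ map_a
    have fac_right : d ≫ f = b := hφ.hom_ext
      (by rw [p.map_comp, map_d, Category.assoc, IsIso.inv_hom_id, Category.comp_id])
      (by rw [← Category.assoc, fac_left, sq.w])
    exact ⟨⟨d, fac_left, fac_right⟩⟩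

theorem IsCocartFib.hasFactorization {p : E ⥤ B} (hp : IsCocartFib p) :
    (cocartesian p).HasFactorization (vertical p) where
  nonempty_mapFactorizationData {x y} f := by
    obtain ⟨w, φ, hw, hφ, map_φ⟩ := hp x (p.obj y) (p.map f)
    have map_f : p.map f = p.map φ ≫ eqToHom hw := by simp [map_φ]
    obtain ⟨m, ⟨map_m, fac⟩, -⟩ := hφ f (eqToHom hw) map_f
    have hm : IsIso (p.map m) := map_m ▸ inferInstance
    exact ⟨{ Z := w, i := φ, p := m, fac := fac, hi := hφ, hp := hm }⟩

theorem IsCocartFib.rlp_cocartesian {p : E ⥤ B} (hp : IsCocartFib p) :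
    (cocartesian p).rlp = vertical p := by
  have := hp.hasFactorization
  refine MorphismProperty.rlp_eq_of_le_rlp_of_hasFactorization_of_isStableUnderRetracts ?_
  intro _ _ f (_ : IsIso (p.map f)) _ _ φ hφ
  exact IsCocart.hasLiftingProperty hφ f

theorem IsCocartFib.vertical_isStableUnderBaseChange {p : E ⥤ B} (hp : IsCocartFib p) :
    (vertical p).IsStableUnderBaseChange :=
  hp.rlp_cocartesian ▸ inferInstance

/-- In a cocartesian fibration, vertical morphisms are stable under
pullback. -/
theorem stmt_1 (p : E ⥤ B) (hp : IsCocartFib p) {x y y' x' : E}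
    (f : x ⟶ y) (hf : IsIso (p.map f)) (g : y' ⟶ y)
    (f' : x' ⟶ y') (g' : x' ⟶ x)
    (hpb : IsPullback g' f' f g) :
    IsIso (p.map f') :=
  have := hp.vertical_isStableUnderBaseChange
  (vertical p).of_isPullback hpb hf

end MoensPaper
end

section
/- Let p : E ⥤ B be a cartesian fibration of categories. Any commutative square in E whose two parallel edges f' : e''' ⟶ e'' and f : e' ⟶ e are cartesian morphisms and whose other two edges g : e''' ⟶ e' and g' : e'' ⟶ e are vertical (their images under p are isomorphisms) is a pullback square in E. -/
open CategoryTheory CategoryTheory.Limits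

namespace MoensPaper

variable {E : Type*} [Category E] {B : Type*} [Category B]

/-!
A map into the source of a cartesian morphism is determined by its composite with that morphism
together with its image in the base. So when the image of the square under `p` is a pullback, a
cone over the cospan is lifted first in `B` and then along `f'`; uniqueness for `f` shows that the
lift has the prescribed second component. When `g` and `g'` are vertical, the image square has two
parallel invertible edges, hence is a pullback.
-/

namespace IsCart

variable {p : E ⥤ B}

theorem hom_ext {x y z : E} {φ : x ⟶ y} (hφ : IsCart p φ) {σ τ : z ⟶ x}
    (hmap : p.map σ = p.map τ) (hcomp : σ ≫ φ = τ ≫ φ) : σ = τ :=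
  (hφ (τ ≫ φ) (p.map τ) (p.map_comp τ φ)).unique ⟨hmap, hcomp⟩ ⟨rfl, rfl⟩

variable {w x y z : E} {f' : w ⟶ x} {f : y ⟶ z} {g : w ⟶ y} {g' : x ⟶ z}

theorem hom_ext_of_isPullback_map (hf' : IsCart p f')
    (hmap : IsPullback (p.map f') (p.map g) (p.map g') (p.map f))
    {t : E} {σ τ : t ⟶ w} (hfst : σ ≫ f' = τ ≫ f') (hsnd : σ ≫ g = τ ≫ g) : σ = τ := by
  refine hf'.hom_ext (hmap.hom_ext ?_ ?_) hfst
  · rw [← p.map_comp, hfst, p.map_comp]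
  · rw [← p.map_comp, hsnd, p.map_comp]

theorem exists_lift_of_isPullback_map (hf' : IsCart p f') (hf : IsCart p f)
    (sq : CommSq f' g g' f) (hmap : IsPullback (p.map f') (p.map g) (p.map g') (p.map f))
    {t : E} (a : t ⟶ x) (b : t ⟶ y) (hab : a ≫ g' = b ≫ f) :
    ∃ τ : t ⟶ w, τ ≫ f' = a ∧ τ ≫ g = b := by
  obtain ⟨v, hva, hvb⟩ := hmap.exists_lift (p.map a) (p.map b) (by
    rw [← p.map_comp, hab, p.map_comp])
  obtain ⟨τ, hτ, hτa⟩ := (hf' a v hva.symm).exists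
  have hτb_map : p.map (τ ≫ g) = p.map b := by rw [p.map_comp, hτ, hvb]
  have hτb_comp : (τ ≫ g) ≫ f = b ≫ f := by
    rw [Category.assoc, ← sq.w, ← Category.assoc, hτa, hab]
  exact ⟨τ, hτa, hf.hom_ext hτb_map hτb_comp⟩

end IsCart

theorem stmt_5_general (p : E ⥤ B) {w x y z : E}
    {f' : w ⟶ x} {f : y ⟶ z} {g : w ⟶ y} {g' : x ⟶ z}
    (sq : CommSq f' g g' f) (hf' : IsCart p f') (hf : IsCart p f)
    (hmap : IsPullback (p.map f') (p.map g) (p.map g') (p.map f)) :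
    IsPullback f' g g' f := by
  choose lift lift_fst lift_snd using
    fun s : PullbackCone g' f =>
      hf'.exists_lift_of_isPullback_map hf sq hmap s.fst s.snd s.condition
  exact ⟨sq, ⟨PullbackCone.IsLimit.mk sq.w lift lift_fst lift_snd fun s _ hfst hsnd =>
    hf'.hom_ext_of_isPullback_map hmap (hfst.trans (lift_fst s).symm)
      (hsnd.trans (lift_snd s).symm)⟩⟩

/-- In a cartesian fibration, a commutative square whose two parallel
edges `f'`, `f` are cartesian and whose other two edges `g`, `g'` are vertical is a
pullback square. -/
theorem stmt_5 (p : E ⥤ B) (hp : IsCartFib p)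
    {e''' e'' e' e : E} (f' : e''' ⟶ e'') (f : e' ⟶ e)
    (g : e''' ⟶ e') (g' : e'' ⟶ e)
    (hf' : IsCart p f') (hf : IsCart p f)
    (hg : IsIso (p.map g)) (hg' : IsIso (p.map g'))
    (w : f' ≫ g' = g ≫ f) :
    IsPullback f' g g' f :=
  stmt_5_general p ⟨w⟩ hf' hf (.of_vert_isIso ((CommSq.mk w).map p))

end MoensPaper
end
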